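/- The following are equivalent: (i) Var(T)/T converges to a finite limit L as T → ∞; (ii) ς² < ∞ and there is a constant C ≥ 0 with ν(U_x)/x → C as x → 0⁺. In that case L = ς² + π·C. -/

import Mathlib

open MeasureTheory Filter Topology Set

/-- The continuous-time variance
`Var(T) = 2 ∫_{H⁻} Re[(e^{zT}-zT-1)/z²] ν(dz)`. -/
noncomputable def VarCt (ν : Measure ℂ) (T : ℝ) : ℝ :=
  2 * ∫ z, ((Complex.exp (z * (T : ℂ)) - z * (T : ℂ) - 1) / z ^ 2).re ∂ν

/-- `ς² = -2 ∫_{H⁻} Re(1/z) ν(dz) ∈ [0,∞]`. -/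
noncomputable def varsigmaSq (ν : Measure ℂ) : ENNReal :=
  2 * ∫⁻ z, ENNReal.ofReal (-(z⁻¹.re)) ∂ν

/-- `U_x = {a + ib : 0 ≤ -a ≤ |b| ≤ x}`. -/
def UsetCt (x : ℝ) : Set ℂ :=
  {z : ℂ | 0 ≤ -z.re ∧ -z.re ≤ |z.im| ∧ |z.im| ≤ x}

/-!
Write `G w = (eʷ - w - 1) / w²`, so that `VarCt ν T / T = ∫ 2T Re G(Tz) ν(dz)`. The integrand is
nonnegative and tends to `-2 Re (1/z)`, so Fatou's lemma makes `ς²` finite as soon as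
`VarCt ν T / T` converges. Two integrations by parts in `G w = ∫₀¹ (1 - s) e^{sw} ds` show that on
the cone `0 ≤ -Re z ≤ |Im z|` the integrand differs from the Fejér kernel `T sinc² (T Im z / 2)` by
`O(-Re (1/z))`, and off the cone it is itself of that size. By dominated convergence
`VarCt ν T / T = ς² + T ∫ sinc² (Tb / 2) μ(db) + o(1)`, where `μ` is the image of `ν` restricted to
the cone under `z ↦ |Im z|`, and `μ (0, x] = ν (UsetCt x)`.

What remains is a Tauberian equivalence for the Fejér kernel. Integrating its means against
`s e^{-s} ds` turns them into means of the Cauchy kernel `1 / (1 + u²)`. The resolvent identity then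
gives all powers of the Cauchy kernel, and Weierstrass approximation the indicator of `(0, 1]`, as
in Karamata's proof. The converse is a layer-cake argument.
-/

section L1Approximation

variable {α : Type*} [MeasurableSpace α] {m : Measure α} {f g h : α → ℝ}

lemma integrable_of_abs_sub_le (hf : AEStronglyMeasurable f m) (hg : Integrable g m)
    (hh : Integrable h m) (hfgh : ∀ᵐ x ∂m, |f x - g x| ≤ h x) : Integrable f m :=
  ((hh.mono' (hf.sub hg.aestronglyMeasurable) hfgh).add hg).congr (by simp)

lemma abs_integral_sub_integral_le (hf : Integrable f m) (hg : Integrable g m)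
    (hh : Integrable h m) (hfgh : ∀ᵐ x ∂m, |f x - g x| ≤ h x) :
    |(∫ x, f x ∂m) - ∫ x, g x ∂m| ≤ ∫ x, h x ∂m := by
  rw [← integral_sub hf hg]
  exact norm_integral_le_of_norm_le (f := fun x => f x - g x) hh hfgh

end L1Approximation

/-- The dilation mean `T ∫_{(0,∞)} f(Tb) μ(db)` of `f` against `μ`, i.e. the integral of `f` against
`T` times the image of `μ` under `b ↦ Tb`. As `T → ∞` it probes `μ` near `0⁺`. -/
noncomputable def dilationMean (μ : Measure ℝ) (f : ℝ → ℝ) (T : ℝ) : ℝ :=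
  T * ∫ b in Ioi 0, f (T * b) ∂μ

/-- `HasDilationLimit μ C f` says that the measures `T · (T • μ)` converge on the test function `f`
to `C` times Lebesgue measure on `(0,∞)`; integrability is included, so that no integral involved
takes a junk value. -/
structure HasDilationLimit (μ : Measure ℝ) (C : ℝ) (f : ℝ → ℝ) : Prop where
  integrableOn : IntegrableOn f (Ioi 0)
  integrableOn_dilation : ∀ T > 0, IntegrableOn (fun b => f (T * b)) (Ioi 0) μ
  tendsto : Tendsto (dilationMean μ f) atTop (𝓝 (C * ∫ u in Ioi 0, f u))

namespace HasDilationLimit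

variable {μ : Measure ℝ} {C : ℝ} {f g : ℝ → ℝ}

lemma congr (hf : HasDilationLimit μ C f) (hfg : EqOn f g (Ioi 0)) : HasDilationLimit μ C g where
  integrableOn := hf.integrableOn.congr_fun hfg measurableSet_Ioi
  integrableOn_dilation T hT := (hf.integrableOn_dilation T hT).congr_fun
    (fun _ hb => hfg (mul_pos hT hb)) measurableSet_Ioi
  tendsto := by
    rw [← setIntegral_congr_fun measurableSet_Ioi hfg]
    refine hf.tendsto.congr' ?_
    filter_upwards [eventually_gt_atTop 0] with T hT
    rw [dilationMean, dilationMean,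
      setIntegral_congr_fun measurableSet_Ioi fun b hb => hfg (mul_pos hT hb)]

lemma add (hf : HasDilationLimit μ C f) (hg : HasDilationLimit μ C g) :
    HasDilationLimit μ C (fun u => f u + g u) where
  integrableOn := hf.integrableOn.add hg.integrableOn
  integrableOn_dilation T hT := (hf.integrableOn_dilation T hT).add (hg.integrableOn_dilation T hT)
  tendsto := by
    rw [integral_add hf.integrableOn hg.integrableOn, mul_add]
    refine (hf.tendsto.add hg.tendsto).congr' ?_
    filter_upwards [eventually_gt_atTop 0] with T hT
    rw [dilationMean, dilationMean, dilationMean, ← mul_add,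
      integral_add (hf.integrableOn_dilation T hT) (hg.integrableOn_dilation T hT)]

lemma const_mul (a : ℝ) (hf : HasDilationLimit μ C f) :
    HasDilationLimit μ C (fun u => a * f u) where
  integrableOn := hf.integrableOn.const_mul a
  integrableOn_dilation T hT := (hf.integrableOn_dilation T hT).const_mul a
  tendsto := by
    rw [integral_const_mul, mul_left_comm]
    refine (hf.tendsto.const_mul a).congr fun T => ?_
    rw [dilationMean, dilationMean, integral_const_mul, mul_left_comm]

lemma comp_mul_left {c : ℝ} (hc : 0 < c) (hf : HasDilationLimit μ C f) :
    HasDilationLimit μ C (fun u => f (c * u)) where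
  integrableOn := (integrableOn_Ioi_comp_mul_left_iff f 0 hc).2 (by simpa using hf.integrableOn)
  integrableOn_dilation T hT := by
    simpa only [mul_assoc] using hf.integrableOn_dilation (c * T) (mul_pos hc hT)
  tendsto := by
    rw [integral_comp_mul_left_Ioi f 0 hc, mul_zero, smul_eq_mul, mul_left_comm]
    refine ((hf.tendsto.comp (tendsto_id.const_mul_atTop hc)).const_mul c⁻¹).congr fun T => ?_
    simp only [dilationMean, Function.comp_apply, id_eq, mul_assoc, inv_mul_cancel_left₀ hc.ne']

/-- The class of test functions is closed under `L¹`-approximation, provided the error is itself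
dominated by a test function. -/
lemma of_forall_approx (hf : Measurable f)
    (happrox : ∀ ε > 0, ∃ g h : ℝ → ℝ, HasDilationLimit μ C g ∧ HasDilationLimit μ C h ∧
      (∀ u > 0, |f u - g u| ≤ h u) ∧ ∫ u in Ioi 0, h u ≤ ε) :
    HasDilationLimit μ C f := by
  have hf_dilation : ∀ T > 0, IntegrableOn (fun b => f (T * b)) (Ioi 0) μ := fun T hT => by
    obtain ⟨g, h, hg, hh, hfgh, -⟩ := happrox 1 one_pos
    exact integrable_of_abs_sub_le (hf.comp (measurable_const_mul T)).aestronglyMeasurable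
      (hg.integrableOn_dilation T hT) (hh.integrableOn_dilation T hT)
      (ae_restrict_of_forall_mem measurableSet_Ioi fun u hu => hfgh _ (mul_pos hT hu))
  have hf_int : IntegrableOn f (Ioi 0) := by
    obtain ⟨g, h, hg, hh, hfgh, -⟩ := happrox 1 one_pos
    exact integrable_of_abs_sub_le hf.aestronglyMeasurable hg.integrableOn hh.integrableOn
      (ae_restrict_of_forall_mem measurableSet_Ioi hfgh)
  refine ⟨hf_int, hf_dilation, Metric.tendsto_nhds.2 fun η hη => ?_⟩
  obtain ⟨g, h, hg, hh, hfgh, hhε⟩ := happrox (η / (4 * (|C| + 1))) (by positivity)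
  have hlim : |(∫ u in Ioi 0, f u) - ∫ u in Ioi 0, g u| ≤ ∫ u in Ioi 0, h u :=
    abs_integral_sub_integral_le hf_int hg.integrableOn hh.integrableOn
      (ae_restrict_of_forall_mem measurableSet_Ioi hfgh)
  have hsmall : |C| * ∫ u in Ioi 0, h u ≤ η / 4 := calc
    |C| * ∫ u in Ioi 0, h u ≤ (|C| + 1) * (η / (4 * (|C| + 1))) := by
      gcongr
      · exact (abs_nonneg _).trans hlim
      · linarith
    _ = η / 4 := by field_simp
  have hlimC : |C * (∫ u in Ioi 0, f u) - C * ∫ u in Ioi 0, g u| ≤ η / 4 := by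
    rw [← mul_sub, abs_mul]
    exact (mul_le_mul_of_nonneg_left hlim (abs_nonneg C)).trans hsmall
  have hhC : C * ∫ u in Ioi 0, h u ≤ η / 4 :=
    (mul_le_mul_of_nonneg_right (le_abs_self C) ((abs_nonneg _).trans hlim)).trans hsmall
  filter_upwards [eventually_gt_atTop 0, Metric.tendsto_nhds.1 hg.tendsto (η / 4) (by positivity),
    Metric.tendsto_nhds.1 hh.tendsto (η / 4) (by positivity)] with T hT hgT hhT
  have hmean : |dilationMean μ f T - dilationMean μ g T| ≤ dilationMean μ h T := by
    rw [dilationMean, dilationMean, dilationMean, ← mul_sub, abs_mul, abs_of_pos hT]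
    gcongr
    exact abs_integral_sub_integral_le (hf_dilation T hT) (hg.integrableOn_dilation T hT)
      (hh.integrableOn_dilation T hT)
      (ae_restrict_of_forall_mem measurableSet_Ioi fun u hu => hfgh _ (mul_pos hT hu))
  rw [Real.dist_eq, abs_lt] at *
  rw [abs_le] at *
  constructor <;> linarith

lemma mul_comp_of_mul_pow {w y : ℝ → ℝ} (hw : Measurable w) (hy : Measurable y)
    (hw_nonneg : ∀ u > 0, 0 ≤ w u) (hy_mem : ∀ u > 0, y u ∈ Icc (0 : ℝ) 1)
    (hpow : ∀ n : ℕ, HasDilationLimit μ C (fun u => w u * y u ^ n)) (hg : Continuous g) :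
    HasDilationLimit μ C (fun u => w u * g (y u)) := by
  have hpoly (p : Polynomial ℝ) : HasDilationLimit μ C (fun u => w u * p.eval (y u)) := by
    induction p using Polynomial.induction_on' with
    | add p q hp hq => simpa only [Polynomial.eval_add, mul_add] using hp.add hq
    | monomial n a =>
      simpa only [Polynomial.eval_monomial, mul_left_comm] using (hpow n).const_mul a
  have hw_lim : HasDilationLimit μ C w := by simpa using hpow 0
  have hw_int : 0 ≤ ∫ u in Ioi 0, w u := setIntegral_nonneg measurableSet_Ioi hw_nonneg
  refine of_forall_approx (hw.mul (hg.measurable.comp hy)) fun ε hε => ?_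
  obtain ⟨p, hp⟩ := exists_polynomial_near_of_continuousOn 0 1 g hg.continuousOn
    (ε / ((∫ u in Ioi 0, w u) + 1)) (by positivity)
  refine ⟨_, _, hpoly p, hw_lim.const_mul (ε / ((∫ u in Ioi 0, w u) + 1)), fun u hu => ?_, ?_⟩
  · rw [← mul_sub, abs_mul, abs_of_nonneg (hw_nonneg u hu), abs_sub_comm, mul_comm]
    exact mul_le_mul_of_nonneg_right (hp _ (hy_mem u hu)).le (hw_nonneg u hu)
  · rw [integral_const_mul, div_mul_eq_mul_div, div_le_iff₀ (by positivity)]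
    gcongr
    linarith

end HasDilationLimit

lemma dilationMean_indicator_Iic (μ : Measure ℝ) {T : ℝ} (hT : 0 < T) :
    dilationMean μ ((Iic 1).indicator 1) T = T * μ.real (Ioc 0 T⁻¹) := by
  have hpre : (fun b => (Iic (1 : ℝ)).indicator (1 : ℝ → ℝ) (T * b)) = (Iic T⁻¹).indicator 1 := by
    ext b
    simp only [indicator_apply, mem_Iic, ← le_inv_mul_iff₀ hT, mul_one, Pi.one_apply]
  rw [dilationMean, hpre, integral_indicator_one measurableSet_Iic,
    measureReal_restrict_apply measurableSet_Iic, inter_comm, Ioi_inter_Iic]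

lemma HasDilationLimit.tendsto_measureReal_Ioc_div {μ : Measure ℝ} {C : ℝ}
    (h : HasDilationLimit μ C ((Iic 1).indicator 1)) :
    Tendsto (fun x => μ.real (Ioc 0 x) / x) (𝓝[>] 0) (𝓝 C) := by
  have hone : ∫ u in Ioi (0 : ℝ), (Iic (1 : ℝ)).indicator (1 : ℝ → ℝ) u = 1 := by
    rw [integral_indicator_one measurableSet_Iic, measureReal_restrict_apply measurableSet_Iic,
      inter_comm, Ioi_inter_Iic, Real.volume_real_Ioc_of_le zero_le_one, sub_zero]
  have hlim := h.tendsto.comp tendsto_inv_nhdsGT_zero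
  rw [hone, mul_one] at hlim
  refine hlim.congr' ?_
  filter_upwards [self_mem_nhdsWithin] with x hx
  rw [Function.comp_apply, dilationMean_indicator_Iic μ (inv_pos.2 hx), inv_inv, div_eq_inv_mul]

/-- The Fejér kernel `(sin (u/2) / (u/2))²`, with value `1` at `u = 0`. -/
noncomputable def fejerKernel (u : ℝ) : ℝ := Real.sinc (u / 2) ^ 2

lemma continuous_fejerKernel : Continuous fejerKernel :=
  (Real.continuous_sinc.comp (continuous_id.div_const 2)).pow 2

lemma fejerKernel_nonneg (u : ℝ) : 0 ≤ fejerKernel u := sq_nonneg _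

lemma fejerKernel_le_one (u : ℝ) : fejerKernel u ≤ 1 :=
  (sq_le_one_iff_abs_le_one _).2 (Real.abs_sinc_le_one _)

lemma fejerKernel_abs (u : ℝ) : fejerKernel |u| = fejerKernel u := by
  rcases abs_choice u with h | h <;> rw [h]
  rw [fejerKernel, neg_div, Real.sinc_neg, fejerKernel]

lemma sq_mul_fejerKernel (u : ℝ) : u ^ 2 * fejerKernel u = 2 * (1 - Real.cos u) := by
  rcases eq_or_ne u 0 with rfl | hu
  · simp
  · rw [fejerKernel, Real.sinc_of_ne_zero (div_ne_zero hu two_ne_zero), div_pow,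
      Real.sin_sq_eq_half_sub, mul_div_cancel₀ u two_ne_zero]
    field_simp

lemma integral_one_sub_cos_mul_exp_neg (u : ℝ) :
    ∫ s in Ioi 0, (1 - Real.cos (s * u)) * Real.exp (-s) = u ^ 2 / (1 + u ^ 2) := by
  set w : ℂ := -1 + u * Complex.I with hw
  have hre : w.re < 0 := by simp [hw]
  have hcos (s : ℝ) : (Complex.exp (w * s)).re = Real.cos (s * u) * Real.exp (-s) := by
    rw [Complex.exp_re, mul_comm]
    simp [hw, mul_comm u s]
  have hint : IntegrableOn (fun s : ℝ => Complex.exp (w * s)) (Ioi 0) :=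
    integrableOn_exp_mul_complex_Ioi hre 0
  have hlaplace : ∫ s in Ioi 0, Real.cos (s * u) * Real.exp (-s) = 1 / (1 + u ^ 2) := by
    have hre_integral := integral_re hint
    simp only [RCLike.re_eq_complex_re, hcos] at hre_integral
    rw [hre_integral, integral_exp_mul_complex_Ioi hre]
    simp [hw, Complex.normSq_apply, Complex.div_re, sq]
  have hintcos : IntegrableOn (fun s => Real.cos (s * u) * Real.exp (-s)) (Ioi 0) := by
    simpa only [IntegrableOn, RCLike.re_eq_complex_re, hcos] using hint.re
  simp_rw [sub_mul, one_mul]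
  rw [integral_sub (integrableOn_exp_neg_Ioi 0) hintcos, integral_exp_neg_Ioi_zero, hlaplace]
  field_simp
  ring

lemma integrableOn_pow_mul_exp_neg (n : ℕ) :
    IntegrableOn (fun s => s ^ n * Real.exp (-s)) (Ioi 0) := by
  refine (Real.GammaIntegral_convergent (s := n + 1) (by positivity)).congr_fun (fun s _ => ?_)
    measurableSet_Ioi
  simp [mul_comm]

lemma integral_mul_exp_neg_Ioi : ∫ s in Ioi 0, s * Real.exp (-s) = 1 := by
  have hGamma := Real.Gamma_eq_integral two_pos
  norm_num only [Real.Gamma_two, Real.rpow_one] at hGamma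
  simp_rw [hGamma, mul_comm]

lemma integral_sq_mul_exp_neg_mul_fejerKernel {u : ℝ} (hu : u ≠ 0) :
    ∫ s in Ioi 0, s ^ 2 * Real.exp (-s) * fejerKernel (s * u) = 2 * (1 + u ^ 2)⁻¹ := by
  have hpoint (s : ℝ) : s ^ 2 * Real.exp (-s) * fejerKernel (s * u) =
      2 / u ^ 2 * ((1 - Real.cos (s * u)) * Real.exp (-s)) := by
    rw [← mul_assoc, div_mul_eq_mul_div, ← sq_mul_fejerKernel]
    field_simp
  simp_rw [hpoint]
  rw [integral_const_mul, integral_one_sub_cos_mul_exp_neg]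
  field_simp

section Tauberian

variable {μ : Measure ℝ} [IsFiniteMeasure μ]

/-- The Laplace transform in `T` turns the Fejér kernel into the Cauchy kernel. -/
lemma integral_mul_exp_neg_mul_dilationMean_fejerKernel (T : ℝ) (hT : 0 < T) :
    ∫ s in Ioi 0, s * Real.exp (-s) * dilationMean μ fejerKernel (T * s) =
      2 * dilationMean μ (fun u => (1 + u ^ 2)⁻¹) T := by
  have hint : Integrable (
      fun p : ℝ × ℝ => p.1 ^ 2 * Real.exp (-p.1) * fejerKernel (p.1 * (T * p.2)))
      ((volume.restrict (Ioi 0)).prod (μ.restrict (Ioi 0))) := by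
    refine (((integrableOn_pow_mul_exp_neg 2).integrable.mul_prod (integrable_const (1 : ℝ))).mono
      ?_ ?_)
    · have := continuous_fejerKernel
      fun_prop
    · refine Eventually.of_forall fun p => ?_
      rw [norm_mul, norm_mul _ (1 : ℝ), norm_one]
      gcongr
      rw [Real.norm_of_nonneg (fejerKernel_nonneg _)]
      exact fejerKernel_le_one _
  calc ∫ s in Ioi 0, s * Real.exp (-s) * dilationMean μ fejerKernel (T * s)
      = ∫ s in Ioi 0, T * ∫ b in Ioi 0, s ^ 2 * Real.exp (-s) * fejerKernel (s * (T * b)) ∂μ := by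
        refine setIntegral_congr_fun measurableSet_Ioi fun s _ => ?_
        simp only [dilationMean, integral_const_mul, mul_comm T s, mul_assoc]
        ring
    _ = T * ∫ b in Ioi 0, (∫ s in Ioi 0, s ^ 2 * Real.exp (-s) * fejerKernel (s * (T * b))) ∂μ := by
        rw [integral_const_mul, integral_integral_swap hint]
    _ = T * ∫ b in Ioi 0, 2 * (1 + (T * b) ^ 2)⁻¹ ∂μ := by
        congr 1
        refine setIntegral_congr_fun measurableSet_Ioi fun b hb => ?_
        exact integral_sq_mul_exp_neg_mul_fejerKernel (mul_pos hT hb).ne'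
    _ = 2 * dilationMean μ (fun u => (1 + u ^ 2)⁻¹) T := by
        rw [integral_const_mul, dilationMean, mul_left_comm]

lemma continuous_dilationMean_fejerKernel : Continuous (dilationMean μ fejerKernel) := by
  refine continuous_id.mul (continuous_of_dominated (bound := fun _ => 1)
    (fun T => ?_) (fun T => ?_) (integrable_const _) ?_)
  · have := continuous_fejerKernel
    fun_prop
  · refine Eventually.of_forall fun b => ?_
    rw [Real.norm_of_nonneg (fejerKernel_nonneg _)]
    exact fejerKernel_le_one _
  · have := continuous_fejerKernel
    exact Eventually.of_forall fun b => by fun_prop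

lemma exists_norm_dilationMean_fejerKernel_le {K : ℝ}
    (h : Tendsto (dilationMean μ fejerKernel) atTop (𝓝 K)) :
    ∃ B, ∀ T > 0, ‖dilationMean μ fejerKernel T‖ ≤ B := by
  obtain ⟨T₀, hT₀⟩ := eventually_atTop.1 (h.norm.eventually_le_const (lt_add_one ‖K‖))
  obtain ⟨B, hB⟩ := isCompact_Icc (a := 0) (b := T₀) |>.exists_bound_of_continuousOn
    (continuous_dilationMean_fejerKernel (μ := μ)).continuousOn
  refine ⟨max B (‖K‖ + 1), fun T hT => ?_⟩
  rcases le_total T T₀ with hle | hle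
  · exact (hB T ⟨hT.le, hle⟩).trans (le_max_left _ _)
  · exact (hT₀ T hle).trans (le_max_right _ _)

lemma hasDilationLimit_cauchyKernel {K : ℝ}
    (h : Tendsto (dilationMean μ fejerKernel) atTop (𝓝 K)) :
    HasDilationLimit μ (K / Real.pi) (fun u => (1 + u ^ 2)⁻¹) where
  integrableOn := integrable_inv_one_add_sq.integrableOn
  integrableOn_dilation T _ := by
    refine (integrable_const (1 : ℝ)).mono' (by fun_prop) (Eventually.of_forall fun b => ?_)
    rw [Real.norm_of_nonneg (by positivity)]
    exact inv_le_one_of_one_le₀ (by nlinarith [sq_nonneg (T * b)])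
  tendsto := by
    obtain ⟨B, hB⟩ := exists_norm_dilationMean_fejerKernel_le h
    have hlim : Tendsto
        (fun T => ∫ s in Ioi 0, s * Real.exp (-s) * dilationMean μ fejerKernel (T * s)) atTop
        (𝓝 (∫ s in Ioi 0, s * Real.exp (-s) * K)) := by
      refine tendsto_integral_filter_of_dominated_convergence (fun s => s * Real.exp (-s) * B) ?_ ?_
        (by simpa using (integrableOn_pow_mul_exp_neg 1).mul_const B) ?_
      · have := continuous_dilationMean_fejerKernel (μ := μ)
        exact Eventually.of_forall fun T => by fun_prop
      · filter_upwards [eventually_gt_atTop 0] with T hT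
        refine ae_restrict_of_forall_mem measurableSet_Ioi fun s hs => ?_
        have hs : 0 < s := hs
        rw [norm_mul, Real.norm_of_nonneg (by positivity)]
        gcongr
        exact hB _ (mul_pos hT hs)
      · refine ae_restrict_of_forall_mem measurableSet_Ioi fun s hs => ?_
        exact (h.comp (tendsto_id.atTop_mul_const hs)).const_mul _
    rw [integral_Ioi_inv_one_add_sq, Real.arctan_zero, sub_zero]
    rw [integral_mul_const, integral_mul_exp_neg_Ioi, one_mul] at hlim
    have hK : K / Real.pi * (Real.pi / 2) = 2⁻¹ * K := by field_simp
    rw [hK]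
    refine (hlim.const_mul 2⁻¹).congr' ?_
    filter_upwards [eventually_gt_atTop 0] with T hT
    rw [integral_mul_exp_neg_mul_dilationMean_fejerKernel T hT, inv_mul_cancel_left₀ two_ne_zero]

end Tauberian

lemma setIntegral_tent_le (s : Set ℝ) (a : ℝ) {δ : ℝ} (hδ : 0 < δ) :
    ∫ u in s, max 0 (1 - |u - a| / δ) ≤ 2 * δ := by
  have htent (u : ℝ) : max 0 (1 - |u - a| / δ) ≤ (Metric.closedBall a δ).indicator 1 u := by
    by_cases hu : u ∈ Metric.closedBall a δ
    · rw [indicator_of_mem hu]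
      exact max_le zero_le_one (sub_le_self _ (by positivity))
    · rw [indicator_of_notMem hu]
      rw [Metric.mem_closedBall, Real.dist_eq, not_le] at hu
      exact max_le le_rfl (sub_nonpos.2 ((one_le_div hδ).2 hu.le))
  calc ∫ u in s, max 0 (1 - |u - a| / δ)
      ≤ ∫ u in s, (Metric.closedBall a δ).indicator 1 u := by
        refine integral_mono_of_nonneg (Eventually.of_forall fun _ => le_max_left _ _) ?_
          (Eventually.of_forall htent)
        exact (integrable_indicator_iff measurableSet_closedBall).2 (integrableOn_const
          (measure_closedBall_lt_top.trans_le' (Measure.restrict_apply_le _ _)).ne)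
    _ ≤ volume.real (Metric.closedBall a δ) := by
        rw [integral_indicator_one measurableSet_closedBall,
          measureReal_restrict_apply measurableSet_closedBall]
        exact measureReal_mono inter_subset_left measure_closedBall_lt_top.ne
    _ = 2 * δ := Real.volume_real_closedBall hδ.le

namespace HasDilationLimit

variable {μ : Measure ℝ} {C : ℝ} {f : ℝ → ℝ}

lemma inv_add_sq (h : HasDilationLimit μ C fun u => (1 + u ^ 2)⁻¹) {l : ℝ} (hl : 0 < l) :
    HasDilationLimit μ C fun u => (l + u ^ 2)⁻¹ := by
  refine ((h.comp_mul_left (inv_pos.2 (Real.sqrt_pos.2 hl))).const_mul l⁻¹).congr fun u _ => ?_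
  simp only [mul_pow, inv_pow, Real.sq_sqrt hl.le, ← mul_inv]
  field_simp

/-- The resolvent identity `K₁ K_l = (K₁ - K_l) / (l - 1)`, where `K_l u = (l + u²)⁻¹`, trades a
power of `K₁` for a second parameter `l`; the diagonal case `l = 1` is recovered as `l → 1`. -/
lemma inv_one_add_sq_pow_mul (h : HasDilationLimit μ C fun u => (1 + u ^ 2)⁻¹) (n : ℕ) :
    ∀ l > 0, HasDilationLimit μ C fun u => (1 + u ^ 2)⁻¹ ^ n * (l + u ^ 2)⁻¹ := by
  induction n with
  | zero => simpa only [pow_zero, one_mul] using fun l hl => h.inv_add_sq hl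
  | succ n ih =>
    have hne {l : ℝ} (hl : 0 < l) (hl1 : l ≠ 1) :
        HasDilationLimit μ C fun u => (1 + u ^ 2)⁻¹ ^ (n + 1) * (l + u ^ 2)⁻¹ := by
      refine (((ih 1 one_pos).add ((ih l hl).const_mul (-1))).const_mul (l - 1)⁻¹).congr
        fun u _ => ?_
      have hl1 : l - 1 ≠ 0 := sub_ne_zero.2 hl1
      rw [pow_succ]
      field_simp
      ring
    intro l hl
    rcases eq_or_ne l 1 with rfl | hl1
    · refine of_forall_approx (by fun_prop) fun ε hε => ?_
      refine ⟨_, _, hne (l := 1 + ε / 2) (by positivity) (by simpa using hε.ne'),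
        h.const_mul (ε / 2), fun u _ => ?_, ?_⟩
      · have hdiff : (1 + u ^ 2)⁻¹ - (1 + ε / 2 + u ^ 2)⁻¹ =
            ε / 2 * ((1 + u ^ 2)⁻¹ * (1 + ε / 2 + u ^ 2)⁻¹) := by
          field_simp
          ring
        have hle {l : ℝ} (hl : 1 ≤ l) : (l + u ^ 2)⁻¹ ≤ 1 := inv_le_one_of_one_le₀ (by nlinarith)
        rw [← mul_sub, hdiff, abs_of_nonneg (by positivity), mul_left_comm]
        gcongr
        exact (mul_le_of_le_one_left (by positivity)
          (pow_le_one₀ (by positivity) (hle le_rfl))).trans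
          (mul_le_of_le_one_right (by positivity) (hle (by linarith)))
      · rw [integral_const_mul, integral_Ioi_inv_one_add_sq, Real.arctan_zero, sub_zero]
        nlinarith [Real.pi_le_four]
    · exact hne hl hl1

/-- Karamata's argument: by Weierstrass approximation in the variable `y = (1 + u²)⁻¹ ∈ (0,1]`, the
powers of the Cauchy kernel control every continuous test function vanishing near infinity. -/
lemma of_continuous_of_eqOn_zero (h : HasDilationLimit μ C fun u => (1 + u ^ 2)⁻¹)
    (hf : Continuous f) {c : ℝ} (hfc : EqOn f 0 (Ici c)) : HasDilationLimit μ C f := by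
  set g : ℝ → ℝ := fun y => y⁻¹ * f √(|y|⁻¹ - 1)
  have hg : Continuous g := continuous_iff_continuousAt.2 fun y => by
    rcases eq_or_ne y 0 with rfl | hy
    · have hzero : g =ᶠ[𝓝 0] 0 := by
        filter_upwards [Metric.ball_mem_nhds (0 : ℝ) (inv_pos.2 (by positivity : 0 < 1 + c ^ 2))]
          with y hy
        rcases eq_or_ne y 0 with rfl | hy0
        · simp [g]
        · have hcy : 1 + c ^ 2 < |y|⁻¹ := lt_inv_of_lt_inv₀ (abs_pos.2 hy0) (by simpa using hy)
          have hc : c ≤ √(|y|⁻¹ - 1) := Real.le_sqrt_of_sq_le (by linarith)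
          simp only [g, hfc hc, Pi.zero_apply, mul_zero]
      exact hzero.continuousAt
    · fun_prop (disch := simpa)
  refine (mul_comp_of_mul_pow (w := fun u => (1 + u ^ 2)⁻¹) (y := fun u => (1 + u ^ 2)⁻¹)
    (by fun_prop) (by fun_prop) (fun u _ => by positivity)
    (fun u _ => ⟨by positivity, inv_le_one_of_one_le₀ (by nlinarith [sq_nonneg u])⟩)
    (fun n => ?_) hg).congr fun u hu => ?_
  · simpa only [mul_comm] using h.inv_one_add_sq_pow_mul n 1 one_pos
  · have hpos : 0 < 1 + u ^ 2 := by positivity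
    simp only [g, abs_of_pos (inv_pos.2 hpos), inv_inv, add_sub_cancel_left, Real.sqrt_sq hu.out.le,
      inv_mul_cancel_left₀ hpos.ne']

lemma indicator_Iic_one (h : HasDilationLimit μ C fun u => (1 + u ^ 2)⁻¹) :
    HasDilationLimit μ C ((Iic 1).indicator 1) := by
  refine of_forall_approx (measurable_const.indicator measurableSet_Iic) fun ε hε => ?_
  obtain ⟨δ, hδ, rfl⟩ : ∃ δ > 0, ε = 2 * δ := ⟨ε / 2, half_pos hε, by ring⟩
  have hramp {u : ℝ} (hu : u ∈ Ici (1 + δ)) : 1 - (u - 1) / δ ≤ 0 := by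
    rw [sub_nonpos, one_le_div hδ]
    linarith [hu.out]
  have htrapezoid : HasDilationLimit μ C fun u => max 0 (min 1 (1 - (u - 1) / δ)) :=
    h.of_continuous_of_eqOn_zero (by fun_prop) fun u hu =>
      max_eq_left ((min_le_right _ _).trans (hramp hu))
  have htent : HasDilationLimit μ C fun u => max 0 (1 - |u - 1| / δ) :=
    h.of_continuous_of_eqOn_zero (c := 1 + δ) (by fun_prop) fun u hu => by
      rw [abs_of_nonneg (by linarith [hu.out])]
      exact max_eq_left (hramp hu)
  refine ⟨_, _, htrapezoid, htent, fun u _ => ?_, setIntegral_tent_le _ _ hδ⟩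
  · rcases le_or_gt u 1 with hu1 | hu1
    · have hge : 1 ≤ 1 - (u - 1) / δ := by
        linarith [div_nonpos_of_nonpos_of_nonneg (sub_nonpos.2 hu1) hδ.le]
      simp [hu1, hge]
    · have hle : 1 - (u - 1) / δ ≤ 1 := by linarith [div_pos (sub_pos.2 hu1) hδ]
      simp [hu1.not_ge, hle, abs_of_pos (sub_pos.2 hu1), abs_of_nonneg (le_max_left (0 : ℝ) _)]

end HasDilationLimit

lemma tendsto_measureReal_Ioc_div_of_tendsto_dilationMean_fejerKernel {μ : Measure ℝ}
    [IsFiniteMeasure μ] {K : ℝ} (h : Tendsto (dilationMean μ fejerKernel) atTop (𝓝 K)) :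
    Tendsto (fun x => μ.real (Ioc 0 x) / x) (𝓝[>] 0) (𝓝 (K / Real.pi)) :=
  (hasDilationLimit_cauchyKernel h).indicator_Iic_one.tendsto_measureReal_Ioc_div

section Superlevel

variable {α : Type*} [MeasurableSpace α]

lemma measurable_measure_superlevel (m : Measure α) (f : α → ℝ) :
    Measurable fun t : ℝ => m {x | t ≤ f x} :=
  Antitone.measurable fun _ _ hst => measure_mono (ofPred_subset_ofPred.2 fun _ => hst.trans)

lemma integrableOn_measureReal_superlevel {m : Measure α} {f : α → ℝ} (hf : Integrable f m)
    (hf_nonneg : 0 ≤ᵐ[m] f) : IntegrableOn (fun t => m.real {x | t ≤ f x}) (Ioi 0) := by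
  refine integrable_toReal_of_lintegral_ne_top (measurable_measure_superlevel m f).aemeasurable ?_
  rw [← lintegral_eq_lintegral_meas_le m hf_nonneg hf.aemeasurable]
  exact hf.lintegral_lt_top.ne

end Superlevel

lemma measureReal_restrict_Ioi_superlevel_comp_mul (m : Measure ℝ) {f : ℝ → ℝ} {T t a : ℝ}
    (hT : 0 < T) (hfa : ∀ u > 0, t ≤ f u ↔ u ≤ a) :
    (m.restrict (Ioi 0)).real {b | t ≤ f (T * b)} = m.real (Ioc 0 (a / T)) := by
  rw [measureReal_restrict_apply' measurableSet_Ioi]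
  congr 1
  ext b
  simp only [mem_inter_iff, mem_ofPred_eq, mem_Ioi, mem_Ioc, le_div_iff₀' hT, and_comm (b := 0 < b)]
  exact and_congr_right fun hb => hfa _ (mul_pos hT hb)

lemma tendsto_mul_measureReal_Ioc_div {μ : Measure ℝ} {C : ℝ}
    (h : Tendsto (fun x => μ.real (Ioc 0 x) / x) (𝓝[>] 0) (𝓝 C))
    {a : ℝ} (ha : 0 ≤ a) : Tendsto (fun T => T * μ.real (Ioc 0 (a / T))) atTop (𝓝 (C * a)) := by
  rcases ha.eq_or_lt with rfl | ha
  · simp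
  have hlim : Tendsto (fun T => a / T) atTop (𝓝[>] 0) :=
    tendsto_nhdsWithin_iff.2 ⟨tendsto_const_nhds.div_atTop tendsto_id,
      (eventually_gt_atTop 0).mono fun T hT => div_pos ha hT⟩
  refine ((h.comp hlim).mul_const a).congr' ?_
  filter_upwards [eventually_gt_atTop 0] with T hT
  rw [Function.comp_apply]
  field_simp

section Abelian

variable {μ : Measure ℝ} [IsFiniteMeasure μ] {C : ℝ}

lemma exists_measureReal_Ioc_le_mul
    (h : Tendsto (fun x => μ.real (Ioc 0 x) / x) (𝓝[>] 0) (𝓝 C)) :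
    ∃ M, ∀ x ≥ 0, μ.real (Ioc 0 x) ≤ M * x := by
  obtain ⟨δ, hδ, hle⟩ := mem_nhdsGT_iff_exists_Ioo_subset.1 (h.eventually_le_const (lt_add_one C))
  have hδ : 0 < δ := hδ
  refine ⟨max (C + 1) (μ.real univ / δ), fun x hx => ?_⟩
  rcases hx.eq_or_lt with rfl | hx
  · simp
  rw [← div_le_iff₀ hx]
  rcases lt_or_ge x δ with hxδ | hxδ
  · exact (hle ⟨hx, hxδ⟩).trans (le_max_left _ _)
  · exact (div_le_div₀ measureReal_nonneg (measureReal_mono (subset_univ _)) hδ hxδ).trans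
      (le_max_right _ _)

/-- By the layer-cake formula, functions whose superlevel sets are intervals `(0, a t]` inherit the
limit from the intervals. -/
lemma HasDilationLimit.of_superlevel {f a : ℝ → ℝ}
    (h : Tendsto (fun x => μ.real (Ioc 0 x) / x) (𝓝[>] 0) (𝓝 C))
    (hf_int : IntegrableOn f (Ioi 0))
    (hf_dilation : ∀ T > 0, IntegrableOn (fun b => f (T * b)) (Ioi 0) μ)
    (hf_nonneg : ∀ u > 0, 0 ≤ f u) (ha : ∀ t > 0, 0 ≤ a t)
    (hfa : ∀ t > 0, ∀ u > 0, t ≤ f u ↔ u ≤ a t) : HasDilationLimit μ C f := by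
  refine ⟨hf_int, hf_dilation, ?_⟩
  have hlevel_volume {t : ℝ} (ht : 0 < t) :
      (volume.restrict (Ioi 0)).real {b | t ≤ f b} = a t := by
    simpa [ha t ht] using measureReal_restrict_Ioi_superlevel_comp_mul volume one_pos (hfa t ht)
  have hf_ae : 0 ≤ᵐ[volume.restrict (Ioi 0)] f :=
    ae_restrict_of_forall_mem measurableSet_Ioi hf_nonneg
  have ha_int : IntegrableOn a (Ioi 0) :=
    (integrableOn_measureReal_superlevel hf_int hf_ae).congr_fun (fun _ ht => hlevel_volume ht)
      measurableSet_Ioi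
  have ha_integral : ∫ u in Ioi 0, f u = ∫ t in Ioi 0, a t := by
    rw [hf_int.integral_eq_integral_meas_le hf_ae]
    exact setIntegral_congr_fun measurableSet_Ioi fun t ht => hlevel_volume ht
  obtain ⟨M, hM⟩ := exists_measureReal_Ioc_le_mul h
  rw [ha_integral, ← integral_const_mul]
  have hlim : Tendsto (fun T => ∫ t in Ioi 0, T * (μ.restrict (Ioi 0)).real {b | t ≤ f (T * b)})
      atTop (𝓝 (∫ t in Ioi 0, C * a t)) := by
    refine tendsto_integral_filter_of_dominated_convergence (fun t => M * a t)
      (Eventually.of_forall fun T => ?_) ?_ (ha_int.const_mul M) ?_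
    · exact ((measurable_measure_superlevel _ _).ennreal_toReal.const_mul T).aestronglyMeasurable
    · filter_upwards [eventually_gt_atTop 0] with T hT
      refine ae_restrict_of_forall_mem measurableSet_Ioi fun t ht => ?_
      rw [Real.norm_of_nonneg (by positivity),
        measureReal_restrict_Ioi_superlevel_comp_mul μ hT (hfa t ht)]
      calc T * μ.real (Ioc 0 (a t / T)) ≤ T * (M * (a t / T)) := by
            gcongr
            exact hM _ (div_nonneg (ha t ht) hT.le)
        _ = M * a t := by field_simp
    · refine ae_restrict_of_forall_mem measurableSet_Ioi fun t ht => ?_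
      refine (tendsto_mul_measureReal_Ioc_div h (ha t ht)).congr' ?_
      filter_upwards [eventually_gt_atTop 0] with T hT
      rw [measureReal_restrict_Ioi_superlevel_comp_mul μ hT (hfa t ht)]
  refine hlim.congr' ?_
  filter_upwards [eventually_gt_atTop 0] with T hT
  rw [integral_const_mul, dilationMean, (hf_dilation T hT).integral_eq_integral_meas_le
    (ae_restrict_of_forall_mem measurableSet_Ioi fun b hb => hf_nonneg _ (mul_pos hT hb))]

lemma hasDilationLimit_one_add_rpow_neg
    (h : Tendsto (fun x => μ.real (Ioc 0 x) / x) (𝓝[>] 0) (𝓝 C)) {p : ℝ} (hp : 1 < p) :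
    HasDilationLimit μ C fun u => (1 + u) ^ (-p) := by
  refine .of_superlevel (a := fun t => max 0 (t ^ (-p)⁻¹ - 1)) h ?_ (fun T hT => ?_)
    (fun u hu => by positivity) (fun t _ => le_max_left _ _) fun t ht u hu => ?_
  · exact (integrable_one_add_norm (by simpa using hp)).integrableOn.congr_fun
      (fun u hu => by simp only [Real.norm_of_nonneg hu.out.le]) measurableSet_Ioi
  · have hmeas : Measurable fun b : ℝ => (1 + T * b) ^ (-p) := by fun_prop
    refine (integrable_const (1 : ℝ)).mono' hmeas.aestronglyMeasurable
      (ae_restrict_of_forall_mem measurableSet_Ioi fun b hb => ?_)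
    have hTb : 0 < T * b := mul_pos hT hb
    rw [Real.norm_of_nonneg (by positivity)]
    exact Real.rpow_le_one_of_one_le_of_nonpos (by linarith) (by linarith)
  · rw [← Real.le_rpow_inv_iff_of_neg (by positivity) ht (by linarith), le_max_iff,
      or_iff_right hu.not_ge, le_sub_iff_add_le']

lemma HasDilationLimit.of_continuous_of_abs_le {f : ℝ → ℝ}
    (h : Tendsto (fun x => μ.real (Ioc 0 x) / x) (𝓝[>] 0) (𝓝 C)) (hf : Continuous f) {B q : ℝ}
    (hq : 1 < q) (hfq : ∀ u ≥ 0, |f u| ≤ B * (1 + u) ^ (-q)) : HasDilationLimit μ C f := by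
  obtain ⟨p, hp, hpq⟩ := exists_between hq
  set g : ℝ → ℝ := fun y => |y| ^ (-p) * f (|y|⁻¹ - 1)
  have hg : Continuous g := continuous_iff_continuousAt.2 fun y => by
    rcases eq_or_ne y 0 with rfl | hy
    · have hbound : ∀ᶠ y in 𝓝 0, ‖g y‖ ≤ B * |y| ^ (q - p) := by
        filter_upwards [Metric.closedBall_mem_nhds (0 : ℝ) one_pos] with y hy
        rcases eq_or_ne y 0 with rfl | hy0
        · simp [g, Real.zero_rpow, (one_pos.trans hp).ne', (sub_pos.2 hpq).ne']
        have hy_pos : 0 < |y| := abs_pos.2 hy0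
        have hy_inv : 1 ≤ |y|⁻¹ := (one_le_inv₀ hy_pos).2 (by simpa using hy)
        rw [norm_mul, Real.norm_of_nonneg (by positivity), Real.norm_eq_abs, sub_eq_neg_add q p,
          Real.rpow_add hy_pos, mul_left_comm]
        gcongr
        simpa [Real.inv_rpow, Real.rpow_neg] using hfq (|y|⁻¹ - 1) (sub_nonneg.2 hy_inv)
      have hlim : Tendsto (fun y : ℝ => B * |y| ^ (q - p)) (𝓝 0) (𝓝 0) := by
        have hcont : Continuous fun y : ℝ => B * |y| ^ (q - p) :=
          continuous_const.mul (continuous_abs.rpow_const fun _ => .inr (sub_pos.2 hpq).le)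
        simpa [Real.zero_rpow (sub_pos.2 hpq).ne'] using hcont.tendsto 0
      have hg0 : g 0 = 0 := by simp [g, Real.zero_rpow, (one_pos.trans hp).ne']
      rw [ContinuousAt, hg0]
      exact squeeze_zero_norm' hbound hlim
    · have hy := abs_ne_zero.2 hy
      fun_prop (disch := simp [hy])
  refine (mul_comp_of_mul_pow (w := fun u => (1 + u) ^ (-p)) (y := fun u => (1 + u)⁻¹)
    (by fun_prop) (by fun_prop) (fun u hu => by positivity)
    (fun u hu => ⟨by positivity, inv_le_one_of_one_le₀ (by linarith)⟩)
    (fun n => ?_) hg).congr fun u hu => ?_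
  · have hpn : 1 < p + n := hp.trans_le (le_add_of_nonneg_right n.cast_nonneg)
    refine (hasDilationLimit_one_add_rpow_neg h hpn).congr fun u hu => ?_
    have hu : 0 < u := hu
    simp only
    rw [neg_add, Real.rpow_add (by positivity), Real.rpow_neg_natCast]
    simp
  · have hu : 0 < u := hu
    have hpos : 0 < 1 + u := by positivity
    simp only [g, abs_of_pos (inv_pos.2 hpos), inv_inv, add_sub_cancel_left]
    rw [← mul_assoc, ← Real.mul_rpow hpos.le (inv_pos.2 hpos).le, mul_inv_cancel₀ hpos.ne',
      Real.one_rpow, one_mul]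

lemma fejerKernel_le_rpow {u : ℝ} (hu : 0 ≤ u) : fejerKernel u ≤ 10 * (1 + u) ^ (-2 : ℝ) := by
  rw [Real.rpow_neg (by positivity), Real.rpow_two, ← div_eq_mul_inv, le_div_iff₀ (by positivity)]
  nlinarith [sq_mul_fejerKernel u, Real.neg_one_le_cos u, fejerKernel_le_one u,
    mul_nonneg (sq_nonneg (u - 1)) (fejerKernel_nonneg u)]

lemma hasDilationLimit_fejerKernel (h : Tendsto (fun x => μ.real (Ioc 0 x) / x) (𝓝[>] 0) (𝓝 C)) :
    HasDilationLimit μ C fejerKernel :=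
  .of_continuous_of_abs_le h continuous_fejerKernel one_lt_two fun u hu =>
    (abs_of_nonneg (fejerKernel_nonneg u)).trans_le (fejerKernel_le_rpow hu)

end Abelian

/-- The Abelian half produces `C * ∫ fejerKernel`, which
the Tauberian half identifies as `C * π`. -/
lemma tendsto_dilationMean_fejerKernel_iff {μ : Measure ℝ} [IsFiniteMeasure μ] {K : ℝ} :
    Tendsto (dilationMean μ fejerKernel) atTop (𝓝 K) ↔
      Tendsto (fun x => μ.real (Ioc 0 x) / x) (𝓝[>] 0) (𝓝 (K / Real.pi)) := by
  refine ⟨tendsto_measureReal_Ioc_div_of_tendsto_dilationMean_fejerKernel, fun h => ?_⟩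
  have hlim := (hasDilationLimit_fejerKernel h).tendsto
  have hK := tendsto_nhds_unique h
    (tendsto_measureReal_Ioc_div_of_tendsto_dilationMean_fejerKernel hlim)
  rwa [← (div_left_inj' Real.pi_ne_zero).1 hK] at hlim

/-- The kernel `(eʷ - w - 1) / w²` of the variance, normalised to time `1`. It is
`∫₀¹ (1 - s) e^{sw} ds` off the origin, where its value is the junk value `0` of `0 / 0`. -/
noncomputable def varKernel (w : ℂ) : ℂ := (Complex.exp w - w - 1) / w ^ 2

lemma measurable_varKernel : Measurable varKernel := by
  unfold varKernel
  fun_prop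

lemma norm_exp_sub_one_le_two {w : ℂ} (hw : w.re ≤ 0) : ‖Complex.exp w - 1‖ ≤ 2 := by
  have hexp : ‖Complex.exp w‖ ≤ 1 := by rwa [Complex.norm_exp, Real.exp_le_one_iff]
  linarith [norm_sub_le (Complex.exp w) 1, norm_one (α := ℂ)]

lemma norm_varKernel_le {w : ℂ} (hw : w.re ≤ 0) : ‖varKernel w‖ ≤ 3 / max 1 ‖w‖ := by
  rw [varKernel, norm_div, norm_pow, sub_right_comm]
  rcases le_total ‖w‖ 1 with h | h
  · have hsmall := Complex.norm_exp_sub_one_sub_id_le h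
    rw [max_eq_left h, div_one]
    exact (div_le_one_of_le₀ hsmall (by positivity)).trans (by norm_num)
  · rw [max_eq_right h, div_le_div_iff₀ (by positivity) (by positivity)]
    nlinarith [norm_sub_le (Complex.exp w - 1) w, norm_exp_sub_one_le_two hw]

lemma varKernel_eq_integral {w : ℂ} (hw : w ≠ 0) :
    varKernel w = ∫ s in (0 : ℝ)..1, (1 - s) * Complex.exp (s * w) := by
  have hderiv (s : ℝ) : HasDerivAt (fun s : ℝ => ((1 - s) / w + 1 / w ^ 2) * Complex.exp (s * w))
      ((1 - s) * Complex.exp (s * w)) s := by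
    have hs : HasDerivAt (fun s : ℝ => (s : ℂ)) 1 s := Complex.ofRealCLM.hasDerivAt
    have hlin := ((hs.const_sub 1).div_const w).add_const (1 / w ^ 2)
    refine (hlin.mul (hs.mul_const w).cexp).congr_deriv ?_
    field_simp
    ring
  rw [intervalIntegral.integral_eq_sub_of_hasDerivAt (fun s _ => hderiv s)
    (by apply Continuous.intervalIntegrable; fun_prop), varKernel]
  simp only [Complex.ofReal_one, Complex.ofReal_zero, one_mul, zero_mul, Complex.exp_zero]
  field_simp
  ring

lemma re_varKernel_eq_integral {w : ℂ} (hw : w ≠ 0) : (varKernel w).re =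
    ∫ s in (0 : ℝ)..1, (1 - s) * Real.exp (s * w.re) * Real.cos (s * w.im) := by
  rw [varKernel_eq_integral hw, ← Complex.reCLM_apply, ← Complex.reCLM.intervalIntegral_comp_comm
    (by apply Continuous.intervalIntegrable; fun_prop)]
  refine intervalIntegral.integral_congr fun s _ => ?_
  simp [Complex.exp_re, Complex.exp_im, mul_assoc]

/-- Two integrations by parts turn `cos` into the nonnegative function `1 - cos`, with a nonnegative
weight because `s ↦ (1 - s) e^{sa}` is convex for `a ≤ 0`. -/
lemma im_sq_mul_re_varKernel {w : ℂ} (hw : w ≠ 0) :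
    w.im ^ 2 * (varKernel w).re = Real.exp w.re * (1 - Real.cos w.im) +
      ∫ s in (0 : ℝ)..1, (w.re ^ 2 * (1 - s) - 2 * w.re) * Real.exp (s * w.re) *
        (1 - Real.cos (s * w.im)) := by
  set a := w.re
  set b := w.im
  have hderiv (s : ℝ) : HasDerivAt
      (fun s => (a * (1 - s) - 1) * Real.exp (s * a) * (1 - Real.cos (s * b)) -
        b * ((1 - s) * Real.exp (s * a) * Real.sin (s * b)))
      ((a ^ 2 * (1 - s) - 2 * a) * Real.exp (s * a) * (1 - Real.cos (s * b)) -
        b ^ 2 * ((1 - s) * Real.exp (s * a) * Real.cos (s * b))) s := by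
    have hid := hasDerivAt_id' s
    have hexp := (hid.mul_const a).exp
    have hfirst := ((((hid.const_sub 1).const_mul a).sub_const 1).mul hexp).mul
      ((hid.mul_const b).cos.const_sub 1)
    have hsecond := (((hid.const_sub 1).mul hexp).mul (hid.mul_const b).sin).const_mul b
    exact (hfirst.sub hsecond).congr_deriv (by simp only [Pi.mul_apply]; ring)
  have hftc := intervalIntegral.integral_eq_sub_of_hasDerivAt (a := 0) (b := 1)
    (fun s _ => hderiv s) (by apply Continuous.intervalIntegrable; fun_prop)
  rw [intervalIntegral.integral_sub (by apply Continuous.intervalIntegrable; fun_prop)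
    (by apply Continuous.intervalIntegrable; fun_prop), intervalIntegral.integral_const_mul,
    ← re_varKernel_eq_integral hw] at hftc
  simp only [one_mul, zero_mul, sub_self, mul_zero, zero_sub, Real.cos_zero, Real.sin_zero,
    sub_zero, neg_mul] at hftc
  linarith

lemma integral_sq_mul_sub_mul_exp (a : ℝ) :
    ∫ s in (0 : ℝ)..1, (a ^ 2 * (1 - s) - 2 * a) * Real.exp (s * a) = 1 - a - Real.exp a := by
  have hderiv (s : ℝ) : HasDerivAt (fun s => (a * (1 - s) - 1) * Real.exp (s * a))
      ((a ^ 2 * (1 - s) - 2 * a) * Real.exp (s * a)) s := by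
    have hid := hasDerivAt_id' s
    exact ((((hid.const_sub 1).const_mul a).sub_const 1).mul (hid.mul_const a).exp).congr_deriv
      (by ring)
  rw [intervalIntegral.integral_eq_sub_of_hasDerivAt (fun s _ => hderiv s)
    (by apply Continuous.intervalIntegrable; fun_prop)]
  simp only [one_mul, zero_mul, sub_self, mul_zero, Real.exp_zero]
  ring

lemma im_sq_mul_re_varKernel_mem_Icc {w : ℂ} (hw : w ≠ 0) (hre : w.re ≤ 0) :
    w.im ^ 2 * (varKernel w).re ∈ Icc (Real.exp w.re * (1 - Real.cos w.im))
      (Real.exp w.re * (1 - Real.cos w.im) + 2 * (1 - w.re - Real.exp w.re)) := by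
  have hweight {s : ℝ} (hs : s ∈ Icc (0 : ℝ) 1) :
      0 ≤ (w.re ^ 2 * (1 - s) - 2 * w.re) * Real.exp (s * w.re) :=
    mul_nonneg (by nlinarith [mul_nonneg (sq_nonneg w.re) (sub_nonneg.2 hs.2)]) (Real.exp_nonneg _)
  rw [im_sq_mul_re_varKernel hw]
  refine ⟨le_add_of_nonneg_right (intervalIntegral.integral_nonneg zero_le_one fun s hs =>
    mul_nonneg (hweight hs) (sub_nonneg.2 (Real.cos_le_one _))), ?_⟩
  rw [← integral_sq_mul_sub_mul_exp, ← intervalIntegral.integral_const_mul]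
  gcongr
  refine intervalIntegral.integral_mono_on zero_le_one
    (by apply Continuous.intervalIntegrable; fun_prop)
    (by apply Continuous.intervalIntegrable; fun_prop) fun s hs => ?_
  have hcos : 1 - Real.cos (s * w.im) ≤ 2 := by linarith [Real.neg_one_le_cos (s * w.im)]
  linarith [mul_le_mul_of_nonneg_left hcos (hweight hs)]

lemma re_varKernel_nonneg {w : ℂ} (hre : w.re ≤ 0) : 0 ≤ (varKernel w).re := by
  rcases eq_or_ne w 0 with rfl | hw
  · simp [varKernel]
  rcases eq_or_ne w.im 0 with him | him
  · rw [re_varKernel_eq_integral hw, him]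
    refine intervalIntegral.integral_nonneg zero_le_one fun s hs => ?_
    simpa using mul_nonneg (sub_nonneg.2 hs.2) (Real.exp_nonneg _)
  · refine nonneg_of_mul_nonneg_right (LE.le.trans ?_ (im_sq_mul_re_varKernel_mem_Icc hw hre).1)
      (sq_pos_of_ne_zero him)
    exact mul_nonneg (Real.exp_nonneg _) (sub_nonneg.2 (Real.cos_le_one _))

lemma abs_re_varKernel_sub_le {w : ℂ} (him : w.im ≠ 0) (hre : w.re ≤ 0) :
    |(varKernel w).re - fejerKernel w.im / 2| ≤ 4 * -w.re / w.im ^ 2 := by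
  have him_sq : 0 < w.im ^ 2 := sq_pos_of_ne_zero him
  have hw : w ≠ 0 := fun h => him (by simp [h])
  obtain ⟨hlower, hupper⟩ := im_sq_mul_re_varKernel_mem_Icc hw hre
  rw [le_div_iff₀ him_sq, ← abs_of_pos him_sq, ← abs_mul, sub_mul, mul_comm _ (w.im ^ 2),
    div_mul_eq_mul_div, mul_comm (fejerKernel _), sq_mul_fejerKernel, abs_le]
  constructor <;> nlinarith [Real.add_one_le_exp w.re, Real.exp_le_one_iff.2 hre,
    Real.cos_le_one w.im, Real.neg_one_le_cos w.im]

/-- The points of the closed left half-plane that lie at least as close to the imaginary axis as to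
the real one, without the apex `0`; up to the apex it is the union of the sets `UsetCt x`. -/
def imagCone : Set ℂ := {z | 0 ≤ -z.re ∧ -z.re ≤ |z.im| ∧ z.im ≠ 0}

/-- The image of `ν` restricted to `imagCone` under `z ↦ |Im z|`, which turns the masses
`ν (UsetCt x)` into a distribution function on the half-line. -/
noncomputable def imagConeHeight (ν : Measure ℂ) : Measure ℝ :=
  (ν.restrict imagCone).map fun z => |z.im|

/-- The dilated Fejér kernel `T Φ(T Im z)` on `imagCone`, extended by `0`. -/
noncomputable def imagConeFejer (T : ℝ) : ℂ → ℝ :=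
  imagCone.indicator fun z => T * fejerKernel (T * z.im)

lemma measurableSet_imagCone : MeasurableSet imagCone := by
  unfold imagCone
  measurability

lemma measurable_imagConeFejer (T : ℝ) : Measurable (imagConeFejer T) := by
  have := continuous_fejerKernel.measurable
  exact Measurable.indicator (by fun_prop) measurableSet_imagCone

instance (ν : Measure ℂ) [IsFiniteMeasure ν] : IsFiniteMeasure (imagConeHeight ν) := by
  unfold imagConeHeight
  infer_instance

lemma measurable_abs_im : Measurable fun z : ℂ => |z.im| := by fun_prop

lemma measureReal_imagConeHeight_Ioc {ν : Measure ℂ} (h0 : ν {0} = 0) (x : ℝ) :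
    (imagConeHeight ν).real (Ioc 0 x) = (ν (UsetCt x)).toReal := by
  have hset : (fun z : ℂ => |z.im|) ⁻¹' Ioc 0 x ∩ imagCone = UsetCt x \ {0} := by
    ext z
    simp only [imagCone, UsetCt, mem_inter_iff, mem_preimage, mem_Ioc, Set.mem_sdiff, mem_ofPred_eq,
      mem_singleton_iff, abs_pos, Complex.ext_iff, Complex.zero_re, Complex.zero_im]
    constructor
    · rintro ⟨⟨him, hx⟩, hre, hle, -⟩
      exact ⟨⟨hre, hle, hx⟩, fun h => him h.2⟩
    · rintro ⟨⟨hre, hle, hx⟩, hz⟩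
      have him : z.im ≠ 0 := fun him => hz ⟨by rw [him, abs_zero] at hle; linarith, him⟩
      exact ⟨⟨him, hx⟩, hre, hle, him⟩
  rw [measureReal_def, imagConeHeight, Measure.map_apply measurable_abs_im measurableSet_Ioc,
    Measure.restrict_apply (measurable_abs_im measurableSet_Ioc), hset, measure_sdiff_null h0]

lemma dilationMean_imagConeHeight (ν : Measure ℂ) (T : ℝ) :
    dilationMean (imagConeHeight ν) fejerKernel T = ∫ z, imagConeFejer T z ∂ν := by
  have habs (z : ℂ) : fejerKernel (T * |z.im|) = fejerKernel (T * z.im) := by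
    rw [← fejerKernel_abs, abs_mul, abs_abs, ← abs_mul, fejerKernel_abs]
  have hsub : imagCone ⊆ (fun z : ℂ => |z.im|) ⁻¹' Ioi 0 := fun z hz => abs_pos.2 hz.2.2
  have hmeas : AEStronglyMeasurable (fun b => fejerKernel (T * b)) (imagConeHeight ν) := by
    have := continuous_fejerKernel
    fun_prop
  simp only [imagConeFejer]
  rw [dilationMean, imagConeHeight, setIntegral_map measurableSet_Ioi hmeas
    measurable_abs_im.aemeasurable, Measure.restrict_restrict (measurable_abs_im measurableSet_Ioi),
    inter_eq_right.2 hsub, integral_indicator measurableSet_imagCone, integral_const_mul]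
  simp only [habs]

lemma integrable_imagConeFejer (ν : Measure ℂ) [IsFiniteMeasure ν] {T : ℝ} (hT : 0 < T) :
    Integrable (imagConeFejer T) ν := by
  refine (integrable_const T).mono' (measurable_imagConeFejer T).aestronglyMeasurable
    (Eventually.of_forall fun z => (norm_indicator_le_norm_self _ _).trans ?_)
  rw [Real.norm_of_nonneg (mul_nonneg hT.le (fejerKernel_nonneg _))]
  exact mul_le_of_le_one_right hT.le (fejerKernel_le_one _)

lemma VarCt_div_eq_integral (ν : Measure ℂ) {T : ℝ} (hT : 0 < T) :
    VarCt ν T / T = ∫ z, 2 * T * (varKernel (T * z)).re ∂ν := by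
  have hscale (z : ℂ) : ((Complex.exp (z * T) - z * T - 1) / z ^ 2).re =
      T ^ 2 * (varKernel (T * z)).re := by
    have hT_ne : (T : ℂ) ≠ 0 := Complex.ofReal_ne_zero.2 hT.ne'
    rw [← Complex.re_ofReal_mul, varKernel, mul_comm z]
    push_cast
    rw [mul_pow, ← mul_div_assoc, mul_div_mul_left _ _ (pow_ne_zero 2 hT_ne)]
  simp only [VarCt, hscale, integral_const_mul]
  field_simp

lemma re_ofReal_mul_nonpos {z : ℂ} (hz : z.re ≤ 0) {T : ℝ} (hT : 0 < T) : (T * z : ℂ).re ≤ 0 := by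
  rw [Complex.re_ofReal_mul]
  exact mul_nonpos_of_nonneg_of_nonpos hT.le hz

lemma integrable_re_varKernel {ν : Measure ℂ} [IsFiniteMeasure ν] (hre : ∀ᵐ z ∂ν, z.re ≤ 0)
    {T : ℝ} (hT : 0 < T) : Integrable (fun z : ℂ => 2 * T * (varKernel (T * z)).re) ν := by
  refine Integrable.const_mul ((integrable_const 3).mono' ?_ ?_) _
  · have hmeas := measurable_varKernel
    have : Measurable fun z : ℂ => (varKernel (T * z)).re := by fun_prop
    exact this.aestronglyMeasurable
  · filter_upwards [hre] with z hz
    exact (Complex.abs_re_le_norm _).trans ((norm_varKernel_le (re_ofReal_mul_nonpos hz hT)).trans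
      (div_le_self zero_le_three (le_max_left _ _)))

lemma neg_re_inv_eq (z : ℂ) : -(z⁻¹.re) = -z.re / ‖z‖ ^ 2 := by
  rw [Complex.inv_re, Complex.normSq_eq_norm_sq, neg_div]

lemma neg_re_inv_nonneg {z : ℂ} (hz : z.re ≤ 0) : 0 ≤ -(z⁻¹.re) := by
  rw [neg_re_inv_eq]
  exact div_nonneg (neg_nonneg.2 hz) (sq_nonneg _)

lemma abs_re_varKernel_sub_imagConeFejer_le_of_mem {z : ℂ} (hz : z ∈ imagCone) {T : ℝ}
    (hT : 0 < T) : |2 * T * (varKernel (T * z)).re - imagConeFejer T z| ≤ 16 * -(z⁻¹.re) := by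
  have ⟨hre, hle, him⟩ := hz
  have hbound := abs_re_varKernel_sub_le (w := T * z)
    (by simpa only [Complex.im_ofReal_mul] using mul_ne_zero hT.ne' him)
    (re_ofReal_mul_nonpos (neg_nonneg.1 hre) hT)
  rw [Complex.im_ofReal_mul, Complex.re_ofReal_mul] at hbound
  have hnorm : ‖z‖ ^ 2 ≤ 2 * z.im ^ 2 := by
    rw [← Complex.normSq_eq_norm_sq, Complex.normSq_apply]
    nlinarith [sq_abs z.im]
  have hnorm_pos : 0 < ‖z‖ ^ 2 := by
    have : z ≠ 0 := fun h => him (by simp [h])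
    positivity
  calc |2 * T * (varKernel (T * z)).re - imagConeFejer T z|
      = 2 * T * |(varKernel (T * z)).re - fejerKernel (T * z.im) / 2| := by
        rw [imagConeFejer, indicator_of_mem hz, ← abs_of_pos (mul_pos two_pos hT), ← abs_mul,
          abs_of_pos (mul_pos two_pos hT), mul_sub]
        congr 2
        ring
    _ ≤ 2 * T * (4 * -(T * z.re) / (T * z.im) ^ 2) := by gcongr
    _ = 16 * -z.re / (2 * z.im ^ 2) := by field_simp; ring
    _ ≤ 16 * -z.re / ‖z‖ ^ 2 := by gcongr
    _ = 16 * -(z⁻¹.re) := by rw [neg_re_inv_eq, mul_div_assoc]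

lemma abs_re_varKernel_le_of_notMem {z : ℂ} (hre : z.re ≤ 0) (hz0 : z ≠ 0)
    (hz : z ∉ imagCone) {T : ℝ} (hT : 0 < T) :
    |2 * T * (varKernel (T * z)).re| ≤ 16 * -(z⁻¹.re) := by
  have hz_norm : 0 < ‖z‖ := norm_pos_iff.2 hz0
  have hlt : |z.im| ≤ -z.re := by
    by_contra! h
    exact hz ⟨neg_nonneg.2 hre, h.le, abs_pos.1 ((neg_nonneg.2 hre).trans_lt h)⟩
  have hnorm : ‖z‖ ≤ 2 * -z.re := by
    linarith [Complex.norm_le_abs_re_add_abs_im z, abs_of_nonpos hre]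
  have hnorm_mul : ‖(T * z : ℂ)‖ = T * ‖z‖ := by
    rw [norm_mul, Complex.norm_real, Real.norm_of_nonneg hT.le]
  calc |2 * T * (varKernel (T * z)).re| = 2 * T * |(varKernel (T * z)).re| := by
        rw [abs_mul, abs_of_pos (mul_pos two_pos hT)]
    _ ≤ 2 * T * (3 / (T * ‖z‖)) := by
        gcongr
        refine (Complex.abs_re_le_norm _).trans
          ((norm_varKernel_le (re_ofReal_mul_nonpos hre hT)).trans ?_)
        rw [← hnorm_mul]
        exact div_le_div_of_nonneg_left zero_le_three (by rw [hnorm_mul]; positivity)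
          (le_max_right _ _)
    _ = 6 * ‖z‖ / ‖z‖ ^ 2 := by field_simp; norm_num
    _ ≤ 16 * -z.re / ‖z‖ ^ 2 := by
        gcongr ?_ / _
        linarith
    _ = 16 * -(z⁻¹.re) := by rw [neg_re_inv_eq, mul_div_assoc]

lemma abs_re_varKernel_sub_imagConeFejer_le {z : ℂ} (hre : z.re ≤ 0) (hz0 : z ≠ 0) {T : ℝ}
    (hT : 0 < T) : |2 * T * (varKernel (T * z)).re - imagConeFejer T z| ≤ 16 * -(z⁻¹.re) := by
  by_cases hz : z ∈ imagCone
  · exact abs_re_varKernel_sub_imagConeFejer_le_of_mem hz hT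
  · rw [imagConeFejer, indicator_of_notMem hz, sub_zero]
    exact abs_re_varKernel_le_of_notMem hre hz0 hz hT

lemma tendsto_re_varKernel {z : ℂ} (hre : z.re ≤ 0) (hz0 : z ≠ 0) :
    Tendsto (fun T : ℝ => 2 * T * (varKernel (T * z)).re) atTop (𝓝 (2 * -(z⁻¹.re))) := by
  rw [tendsto_iff_norm_sub_tendsto_zero]
  refine squeeze_zero' (Eventually.of_forall fun _ => norm_nonneg _) ?_
    (tendsto_const_nhds.div_atTop tendsto_id : Tendsto (fun T => 4 / ‖z‖ ^ 2 / T) atTop (𝓝 0))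
  filter_upwards [eventually_gt_atTop 0] with T hT
  have hT_ne : (T : ℂ) ≠ 0 := Complex.ofReal_ne_zero.2 hT.ne'
  have hdiff : 2 * T * (varKernel (T * z)).re - 2 * -(z⁻¹.re) =
      ((2 * (Complex.exp (T * z) - 1) / (z ^ 2 * T) : ℂ)).re := by
    have hcomplex : (2 * (Complex.exp (T * z) - 1) / (z ^ 2 * T) : ℂ) =
        (2 * T : ℝ) * varKernel (T * z) + (2 : ℝ) * z⁻¹ := by
      rw [varKernel]
      push_cast
      field_simp
      ring
    rw [hcomplex, Complex.add_re, Complex.re_ofReal_mul, Complex.re_ofReal_mul]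
    ring
  rw [hdiff, div_div]
  refine (Complex.abs_re_le_norm _).trans ?_
  rw [norm_div, norm_mul, norm_mul, norm_pow, Complex.norm_real, Real.norm_of_nonneg hT.le,
    Complex.norm_two]
  gcongr
  linarith [norm_exp_sub_one_le_two (re_ofReal_mul_nonpos hre hT)]

lemma tendsto_imagConeFejer (z : ℂ) :
    Tendsto (fun T => imagConeFejer T z) atTop (𝓝 0) := by
  by_cases hz : z ∈ imagCone
  · have him : z.im ≠ 0 := hz.2.2
    simp only [imagConeFejer, indicator_of_mem hz]
    refine squeeze_zero' ?_ ?_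
      (tendsto_const_nhds.div_atTop tendsto_id : Tendsto (fun T => 4 / z.im ^ 2 / T) atTop (𝓝 0))
    · filter_upwards [eventually_gt_atTop 0] with T hT
      exact mul_nonneg hT.le (fejerKernel_nonneg _)
    · filter_upwards [eventually_gt_atTop 0] with T hT
      rw [div_div, le_div_iff₀ (by positivity)]
      linarith [sq_mul_fejerKernel (T * z.im), Real.neg_one_le_cos (T * z.im)]
  · simp only [imagConeFejer, indicator_of_notMem hz, tendsto_const_nhds]

lemma varsigmaSq_eq_lintegral (ν : Measure ℂ) :
    varsigmaSq ν = ∫⁻ z, ENNReal.ofReal (2 * -(z⁻¹.re)) ∂ν := by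
  simp only [ENNReal.ofReal_mul zero_le_two, ENNReal.ofReal_ofNat]
  rw [lintegral_const_mul _ (by fun_prop), varsigmaSq]

section Reduction

variable {ν : Measure ℂ}

lemma integrable_neg_re_inv (hre : ∀ᵐ z ∂ν, z.re ≤ 0) (hς : varsigmaSq ν < ⊤) :
    Integrable (fun z : ℂ => -(z⁻¹.re)) ν := by
  rw [← lintegral_ofReal_ne_top_iff_integrable
    (by fun_prop : Measurable fun z : ℂ => -(z⁻¹.re)).aestronglyMeasurable
    (hre.mono fun z hz => neg_re_inv_nonneg hz)]
  exact (ENNReal.lt_top_of_mul_ne_top_right hς.ne two_ne_zero).ne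

lemma toReal_varsigmaSq (hre : ∀ᵐ z ∂ν, z.re ≤ 0) :
    (varsigmaSq ν).toReal = ∫ z, 2 * -(z⁻¹.re) ∂ν := by
  rw [varsigmaSq_eq_lintegral, integral_eq_lintegral_of_nonneg_ae
    (hre.mono fun z hz => mul_nonneg zero_le_two (neg_re_inv_nonneg hz))
    (by fun_prop : Measurable fun z : ℂ => 2 * -(z⁻¹.re)).aestronglyMeasurable]

variable [IsFiniteMeasure ν]

/-- Fatou's lemma: the integrand of `VarCt ν T / T` is nonnegative and tends to that of `ς²`. -/
lemma varsigmaSq_lt_top_of_tendsto (hre : ∀ᵐ z ∂ν, z.re ≤ 0) (hne : ∀ᵐ z ∂ν, z ≠ 0) {L : ℝ}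
    (hL : Tendsto (fun T => VarCt ν T / T) atTop (𝓝 L)) : varsigmaSq ν < ⊤ := by
  let F (T : ℝ) (z : ℂ) : ENNReal := ENNReal.ofReal (2 * T * (varKernel (T * z)).re)
  have hF_meas (T : ℝ) : Measurable (F T) := by
    have := measurable_varKernel
    fun_prop
  have hF_lintegral {T : ℝ} (hT : 0 < T) : ∫⁻ z, F T z ∂ν = ENNReal.ofReal (VarCt ν T / T) := by
    rw [VarCt_div_eq_integral ν hT,
      ofReal_integral_eq_lintegral_ofReal (integrable_re_varKernel hre hT)]
    filter_upwards [hre] with z hz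
    exact mul_nonneg (by positivity) (re_varKernel_nonneg (re_ofReal_mul_nonpos hz hT))
  have hle : varsigmaSq ν ≤ ENNReal.ofReal L := calc
    varsigmaSq ν = ∫⁻ z, liminf (fun n : ℕ => F n z) atTop ∂ν := by
        rw [varsigmaSq_eq_lintegral]
        refine lintegral_congr_ae ?_
        filter_upwards [hre, hne] with z hz hz0
        exact (ENNReal.tendsto_ofReal
          ((tendsto_re_varKernel hz hz0).comp tendsto_natCast_atTop_atTop)).liminf_eq.symm
    _ ≤ liminf (fun n : ℕ => ∫⁻ z, F n z ∂ν) atTop := lintegral_liminf_le fun n => hF_meas n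
    _ = liminf (fun n : ℕ => ENNReal.ofReal (VarCt ν n / n)) atTop := by
        refine liminf_congr ?_
        filter_upwards [eventually_gt_atTop 0] with n hn
        exact hF_lintegral (Nat.cast_pos.2 hn)
    _ = ENNReal.ofReal L :=
        (ENNReal.tendsto_ofReal (hL.comp tendsto_natCast_atTop_atTop)).liminf_eq
  exact hle.trans_lt ENNReal.ofReal_lt_top

lemma tendsto_VarCt_div_sub_dilationMean (hre : ∀ᵐ z ∂ν, z.re ≤ 0) (hne : ∀ᵐ z ∂ν, z ≠ 0)
    (hς : varsigmaSq ν < ⊤) :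
    Tendsto (fun T => VarCt ν T / T - dilationMean (imagConeHeight ν) fejerKernel T) atTop
      (𝓝 (varsigmaSq ν).toReal) := by
  have hlim : Tendsto (fun T : ℝ => ∫ z, (2 * T * (varKernel (T * z)).re - imagConeFejer T z) ∂ν)
      atTop (𝓝 (∫ z, 2 * -(z⁻¹.re) ∂ν)) := by
    refine tendsto_integral_filter_of_dominated_convergence (fun z => 16 * -(z⁻¹.re)) ?_ ?_
      ((integrable_neg_re_inv hre hς).const_mul 16) ?_
    · filter_upwards [eventually_gt_atTop 0] with T hT
      exact ((integrable_re_varKernel hre hT).sub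
        (integrable_imagConeFejer ν hT)).aestronglyMeasurable
    · filter_upwards [eventually_gt_atTop 0] with T hT
      filter_upwards [hre, hne] with z hz hz0
      exact abs_re_varKernel_sub_imagConeFejer_le hz hz0 hT
    · filter_upwards [hre, hne] with z hz hz0
      simpa using (tendsto_re_varKernel hz hz0).sub (tendsto_imagConeFejer z)
  rw [toReal_varsigmaSq hre]
  refine hlim.congr' ?_
  filter_upwards [eventually_gt_atTop 0] with T hT
  rw [integral_sub (integrable_re_varKernel hre hT) (integrable_imagConeFejer ν hT),
    VarCt_div_eq_integral ν hT, dilationMean_imagConeHeight]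

lemma tendsto_VarCt_div_iff (hre : ∀ᵐ z ∂ν, z.re ≤ 0) (h0 : ν {0} = 0)
    (hς : varsigmaSq ν < ⊤) {L : ℝ} :
    Tendsto (fun T => VarCt ν T / T) atTop (𝓝 L) ↔
      Tendsto (fun x => (ν (UsetCt x)).toReal / x) (𝓝[>] 0)
        (𝓝 ((L - (varsigmaSq ν).toReal) / Real.pi)) := by
  have hdiff := tendsto_VarCt_div_sub_dilationMean hre (measure_eq_zero_iff_ae_notMem.1 h0) hς
  simp only [← measureReal_imagConeHeight_Ioc h0]
  rw [← tendsto_dilationMean_fejerKernel_iff]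
  exact ⟨fun h => by simpa using h.sub hdiff, fun h => by simpa using h.add hdiff⟩

end Reduction

theorem continuous_time_linear_variance_iff_general
    (ν : Measure ℂ) [IsFiniteMeasure ν]
    (hsupp : ν {z : ℂ | ¬ z.re ≤ 0} = 0)
    (h0 : ν {(0 : ℂ)} = 0) :
    ((∃ L : ℝ, Tendsto (fun T : ℝ => VarCt ν T / T) atTop (𝓝 L)) ↔
      (varsigmaSq ν < ⊤ ∧ ∃ C : ℝ, 0 ≤ C ∧
        Tendsto (fun x : ℝ => (ν (UsetCt x)).toReal / x) (𝓝[>] (0:ℝ)) (𝓝 C))) ∧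
    ∀ L C : ℝ, Tendsto (fun T : ℝ => VarCt ν T / T) atTop (𝓝 L) →
      Tendsto (fun x : ℝ => (ν (UsetCt x)).toReal / x) (𝓝[>] (0:ℝ)) (𝓝 C) →
      L = (varsigmaSq ν).toReal + Real.pi * C := by
  have hre : ∀ᵐ z ∂ν, z.re ≤ 0 := ae_iff.2 hsupp
  have hς {L : ℝ} (hL : Tendsto (fun T => VarCt ν T / T) atTop (𝓝 L)) : varsigmaSq ν < ⊤ :=
    varsigmaSq_lt_top_of_tendsto hre (measure_eq_zero_iff_ae_notMem.1 h0) hL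
  have hcone {L : ℝ} (hL : Tendsto (fun T => VarCt ν T / T) atTop (𝓝 L)) :=
    (tendsto_VarCt_div_iff hre h0 (hς hL)).1 hL
  refine ⟨⟨fun ⟨L, hL⟩ => ⟨hς hL, _, ?_, hcone hL⟩, fun ⟨hς, C, _, hC⟩ => ?_⟩, fun L C hL hC => ?_⟩
  · refine ge_of_tendsto (hcone hL) (eventually_mem_nhdsWithin.mono fun x hx => ?_)
    exact div_nonneg ENNReal.toReal_nonneg (le_of_lt hx)
  · refine ⟨(varsigmaSq ν).toReal + Real.pi * C, (tendsto_VarCt_div_iff hre h0 hς).2 ?_⟩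
    rwa [add_sub_cancel_left, mul_div_cancel_left₀ _ Real.pi_ne_zero]
  · rw [tendsto_nhds_unique hC (hcone hL), mul_div_cancel₀ _ Real.pi_ne_zero, add_sub_cancel]

/-- **Theorem 3.2 (first part).**  Let `ν` be a finite conjugation-invariant
measure on the closed left half-plane with `ν({0}) = 0`.  Then `Var(T)/T`
converges to a finite limit `L` as `T → ∞` iff `ς² < ∞` and `ν(U_x)/x → C`
as `x → 0⁺` for some `C ≥ 0`; and in that case `L = ς² + πC`. -/
theorem continuous_time_linear_variance_iff
    (ν : Measure ℂ) [IsFiniteMeasure ν]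
    (hsupp : ν {z : ℂ | ¬ z.re ≤ 0} = 0)
    (h0 : ν {(0 : ℂ)} = 0)
    (hconj : ∀ A : Set ℂ, MeasurableSet A → ν ((starRingEnd ℂ) ⁻¹' A) = ν A) :
    ((∃ L : ℝ, Tendsto (fun T : ℝ => VarCt ν T / T) atTop (𝓝 L)) ↔
      (varsigmaSq ν < ⊤ ∧ ∃ C : ℝ, 0 ≤ C ∧
        Tendsto (fun x : ℝ => (ν (UsetCt x)).toReal / x) (𝓝[>] (0:ℝ)) (𝓝 C))) ∧
    ∀ L C : ℝ, Tendsto (fun T : ℝ => VarCt ν T / T) atTop (𝓝 L) →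
      Tendsto (fun x : ℝ => (ν (UsetCt x)).toReal / x) (𝓝[>] (0:ℝ)) (𝓝 C) →
      L = (varsigmaSq ν).toReal + Real.pi * C :=
  continuous_time_linear_variance_iff_general ν hsupp h0
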